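/- Suppose there exist a unitary x on ℂ^d⊗ℂ^d and σ^{(1)} ∈ {+1,−1} with v₂₃·u₁₂·u₃₄ = σ^{(1)}·x₁₂·(x†)₃₄·(v†)₂₃. Then for every k ≥ 1 there exist a unitary x_k on ℂ^{d^k}⊗ℂ^{d^k} and σ^{(k)} ∈ {+1,−1} with (v^{(k)})₂₃·(u^{(k)})₁₂·(u^{(k)})₃₄ = σ^{(k)}·(x_k)₁₂·(x_k†)₃₄·((v^{(k)})†)₂₃ (subscripts now referring to tensor factors of dimension d^k), and moreover σ^{(k)} = σ^{(1)} if k is odd and σ^{(k)} = σ^{(2)} if k is even. -/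

import Mathlib

/-!
Slicing the relation at fixed indices of the outer factors 1 and 4 turns it into
`v (Aᵢ ⊗ Bⱼ) v = σ Xᵢ ⊗ Yⱼ`, where `A`, `X` are the slices of `u`, `x` and `B`, `Y` those of `u`, `x†`.
Conjugation by `v` then maps `Xᵢ Aᵢ' ⊗ Yⱼ Bⱼ'` to `Aᵢ Xᵢ' ⊗ Bⱼ Yⱼ'`; inserting `∑ Y Y†`, a multiple
of the identity, shows that it maps `Xᵢ Aᵢ' ⊗ 1` to `c Aᵢ Xᵢ' ⊗ 1`, and taking traces gives `c² = 1`
(`exists_sign_of_families`). Inserted back into the relation, this is the transport identity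
`v₂₃ u₃₄ (x†)₁₂ = ε (x†)₃₄ (u†)₁₂ (v†)₂₃` with `ε = σ c` (`exists_transport_sign`).

On a chain of spins, let `Z₀ = x†` and let `Z_{j+1}` be `Z_j` shifted right by two sites times
`u†` on the first pair of sites times `v†` on the second and third sites. The transport identity
propagates to `Z_j` (`blockZ_transport`), and an induction adding two spins at each end of the
doubled block proves the relation for blocks of `k = j + 1` spins with `x_k = Z_j†` and sign
`σ ε^j` (`blockU_relation`). Hence the sign is `σ` for odd `k` and `σ ε` for even `k`.

The remaining lemmas identify the tensor products over blocks, and the entrywise formulas for the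
blocked gates, with operators on the chain (`trrel_iff`, `reindex_ublk`, `reindex_vblk`).
-/

open scoped Kronecker Matrix

/-- `w₁₂ = w ⊗ 1 ⊗ 1` acting on the first two of four factors. -/
noncomputable def lay12 {α : Type*} [Fintype α] [DecidableEq α]
    (w : Matrix (α × α) (α × α) ℂ) :
    Matrix ((α × α) × α × α) ((α × α) × α × α) ℂ :=
  w ⊗ₖ (1 : Matrix (α × α) (α × α) ℂ)

/-- `w₃₄ = 1 ⊗ 1 ⊗ w` acting on the last two of four factors. -/
noncomputable def lay34 {α : Type*} [Fintype α] [DecidableEq α]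
    (w : Matrix (α × α) (α × α) ℂ) :
    Matrix ((α × α) × α × α) ((α × α) × α × α) ℂ :=
  (1 : Matrix (α × α) (α × α) ℂ) ⊗ₖ w

/-- `w₂₃ = 1 ⊗ w ⊗ 1` acting on the middle two of four factors. -/
noncomputable def lay23 {α : Type*} [Fintype α] [DecidableEq α]
    (w : Matrix (α × α) (α × α) ℂ) :
    Matrix ((α × α) × α × α) ((α × α) × α × α) ℂ :=
  Matrix.of fun p q =>
    if p.1.1 = q.1.1 ∧ p.2.2 = q.2.2 then w (p.1.2, p.2.1) (q.1.2, q.2.1) else 0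

/-- The time-reversal relation `v₂₃ u₁₂ u₃₄ = σ x₁₂ (x†)₃₄ (v†)₂₃`. -/
def TRrel {α : Type*} [Fintype α] [DecidableEq α]
    (u v x : Matrix (α × α) (α × α) ℂ) (σ : ℂ) : Prop :=
  lay23 v * lay12 u * lay34 u = σ • (lay12 x * lay34 xᴴ * lay23 vᴴ)

/-- Spin `j` (among `2k` spins of dimension `d`) of a state of `ℂ^{d^k} ⊗ ℂ^{d^k}`. -/
def sp {d k : ℕ} (p : (Fin k → Fin d) × (Fin k → Fin d)) (j : Fin (2 * k)) : Fin d :=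
  if h : j.val < k then p.1 ⟨j.val, h⟩ else p.2 ⟨j.val - k, by have := j.isLt; omega⟩

/-- The blocked unitary `u^{(k)} = (1 ⊗ v^{⊗(k-1)} ⊗ 1) · u^{⊗k}` on
`ℂ^{d^k} ⊗ ℂ^{d^k} ≅ (ℂ^d)^{⊗2k}`: the `k` copies of `u` act on the spin pairs
`(2s-1, 2s)`, the `k-1` copies of `v` on the pairs `(2s, 2s+1)`. -/
noncomputable def ublk (d k : ℕ) (u v : Matrix (Fin d × Fin d) (Fin d × Fin d) ℂ) :
    Matrix ((Fin k → Fin d) × (Fin k → Fin d)) ((Fin k → Fin d) × (Fin k → Fin d)) ℂ :=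
  Matrix.of fun p q =>
    ∑ z : Fin k → Fin d × Fin d,
      (if hk : 0 < k then
        (if sp p ⟨0, by omega⟩ = (z ⟨0, hk⟩).1 ∧
            sp p ⟨2 * k - 1, by omega⟩ = (z ⟨k - 1, by omega⟩).2 then (1 : ℂ) else 0)
       else 1) *
      (∏ s : Fin (k - 1),
        v (sp p ⟨2 * s.val + 1, by have := s.isLt; omega⟩,
           sp p ⟨2 * s.val + 2, by have := s.isLt; omega⟩)
          ((z ⟨s.val, by have := s.isLt; omega⟩).2,
           (z ⟨s.val + 1, by have := s.isLt; omega⟩).1)) *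
      (∏ s : Fin k,
        u (z s) (sp q ⟨2 * s.val, by have := s.isLt; omega⟩,
                 sp q ⟨2 * s.val + 1, by have := s.isLt; omega⟩))

/-- The blocked unitary `v^{(k)} = 1^{⊗(k-1)} ⊗ v ⊗ 1^{⊗(k-1)}`, with `v` acting on the
middle pair `(k, k+1)` of the `2k` spins. -/
noncomputable def vblk (d k : ℕ) (v : Matrix (Fin d × Fin d) (Fin d × Fin d) ℂ) :
    Matrix ((Fin k → Fin d) × (Fin k → Fin d)) ((Fin k → Fin d) × (Fin k → Fin d)) ℂ :=
  Matrix.of fun p q =>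
    if hk : 0 < k then
      (if ∀ j : Fin (2 * k), j.val ≠ k - 1 → j.val ≠ k → sp p j = sp q j
        then (1 : ℂ) else 0) *
      v (sp p ⟨k - 1, by omega⟩, sp p ⟨k, by omega⟩)
        (sp q ⟨k - 1, by omega⟩, sp q ⟨k, by omega⟩)
    else 1

set_option linter.unusedSectionVars false

/-! ### A sign attached to a factorised relation -/

section KeyLemma

theorem kron_sum {S I : Type*} (s : Finset I) (a : Matrix S S ℂ) (f : I → Matrix S S ℂ) :
    a ⊗ₖ (∑ i ∈ s, f i) = ∑ i ∈ s, a ⊗ₖ f i := by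
  ext p q
  simp [Matrix.sum_apply, Finset.mul_sum]

theorem sum_kron {S I : Type*} (s : Finset I) (a : Matrix S S ℂ) (f : I → Matrix S S ℂ) :
    (∑ i ∈ s, f i) ⊗ₖ a = ∑ i ∈ s, f i ⊗ₖ a := by
  ext p q
  simp [Matrix.sum_apply, Finset.sum_mul]

/-- The source of the sign. Conjugation by `v` maps `X i A i' ⊗ Y j B j'` to `A i X i' ⊗ B j Y j'`.
Since `∑ Y Yᴴ` is scalar and each `Yᴴ` lies in the span of the `B`'s, it maps `X i A i' ⊗ 1` to
`A i X i' ⊗ m` for a fixed operator `m`; symmetrically it maps `1 ⊗ Y j B j'` to `n ⊗ B j Y j'`.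
Multiplying the two forces `n ⊗ m` to be a nonzero scalar, hence `m` is a scalar `c` (up to the
normalisation `D`), and the cyclicity of the trace yields `c² = 1`. -/
theorem exists_sign_of_families {S I J : Type*} [Fintype S] [DecidableEq S] [Nonempty S]
    [Fintype I] [Fintype J]
    (v : Matrix (S × S) (S × S) ℂ) (hv : vᴴ * v = 1) (hv' : v * vᴴ = 1)
    (A X : I → Matrix S S ℂ) (B Y : J → Matrix S S ℂ) (σ : ℂ) (hσ : σ * σ = 1)
    (hR : ∀ i j, v * (A i ⊗ₖ B j) * v = σ • (X i ⊗ₖ Y j))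
    (D : ℂ) (hD : D ≠ 0)
    (hX1 : ∑ i, (X i)ᴴ * X i = D • 1) (hX2 : ∑ i, X i * (X i)ᴴ = D • 1)
    (hY1 : ∑ j, (Y j)ᴴ * Y j = D • 1) (hY2 : ∑ j, Y j * (Y j)ᴴ = D • 1)
    (t : I → I → ℂ) (hXA : ∀ i, (X i)ᴴ = ∑ i', t i i' • A i')
    (s : J → J → ℂ) (hYB : ∀ j, (Y j)ᴴ = ∑ j', s j j' • B j') :
    ∃ c : ℂ, c * c = 1 ∧ ∀ i i', vᴴ * ((X i * A i') ⊗ₖ (1 : Matrix S S ℂ)) * v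
      = c • ((A i * X i') ⊗ₖ (1 : Matrix S S ℂ)) := by
  have hL : ∀ i j, vᴴ * (X i ⊗ₖ Y j) = σ • ((A i ⊗ₖ B j) * v) := by
    intro i j
    have h := congrArg (fun m => σ • (vᴴ * m)) (hR i j)
    simp only [Matrix.mul_smul, smul_smul, hσ, one_smul] at h
    rw [← h, Matrix.mul_assoc, ← Matrix.mul_assoc, hv, Matrix.one_mul]
  have hP : ∀ i j i' j', vᴴ * ((X i * A i') ⊗ₖ (Y j * B j')) * v
      = (A i * X i') ⊗ₖ (B j * Y j') := by
    intro i j i' j'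
    rw [Matrix.mul_kronecker_mul, ← Matrix.mul_assoc, hL, Matrix.smul_mul, Matrix.smul_mul,
      Matrix.mul_assoc, Matrix.mul_assoc, ← Matrix.mul_assoc v, hR, Matrix.mul_smul, smul_smul, hσ,
      one_smul, ← Matrix.mul_kronecker_mul]
  set m : Matrix S S ℂ := ∑ j, ∑ j', s j j' • (B j * Y j') with hm
  set n : Matrix S S ℂ := ∑ i, ∑ i', t i i' • (A i * X i') with hn
  have h1 : ∀ i i', D • (vᴴ * ((X i * A i') ⊗ₖ (1 : Matrix S S ℂ)) * v)
      = (A i * X i') ⊗ₖ m := by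
    intro i i'
    rw [← Matrix.smul_mul, ← Matrix.mul_smul, ← Matrix.kronecker_smul, ← hY2]
    simp only [hYB, hm, Matrix.mul_sum, Matrix.sum_mul, Matrix.mul_smul, Matrix.smul_mul, hP,
      kron_sum, Matrix.kronecker_smul]
  have h2 : ∀ j j', D • (vᴴ * ((1 : Matrix S S ℂ) ⊗ₖ (Y j * B j')) * v)
      = n ⊗ₖ (B j * Y j') := by
    intro i i'
    rw [← Matrix.smul_mul, ← Matrix.mul_smul, ← Matrix.smul_kronecker, ← hX2]
    simp only [hXA, hn, Matrix.mul_sum, Matrix.sum_mul, Matrix.mul_smul, Matrix.smul_mul, hP,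
      sum_kron, Matrix.smul_kronecker]
  have h3 : ∀ i j i' j', (A i * X i' * n) ⊗ₖ (m * (B j * Y j'))
      = (D * D) • ((A i * X i') ⊗ₖ (B j * Y j')) := by
    intro i j i' j'
    rw [Matrix.mul_kronecker_mul, ← h1, ← h2, ← hP i j i' j', Matrix.smul_mul, Matrix.mul_smul,
      smul_smul]
    congr 1
    have : (X i * A i') ⊗ₖ (Y j * B j')
        = ((X i * A i') ⊗ₖ (1 : Matrix S S ℂ)) * ((1 : Matrix S S ℂ) ⊗ₖ (Y j * B j')) := by
      rw [← Matrix.mul_kronecker_mul, Matrix.mul_one, Matrix.one_mul]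
    rw [this]
    simp only [Matrix.mul_assoc]
    rw [← Matrix.mul_assoc v, hv', Matrix.one_mul]
  have hAX : ∑ i, ∑ i', t i i' • (A i' * X i) = D • 1 := by
    rw [← hX1]; simp only [hXA, Matrix.sum_mul, Matrix.smul_mul]
  have hBY : ∑ j, ∑ j', s j j' • (B j' * Y j) = D • 1 := by
    rw [← hY1]; simp only [hYB, Matrix.sum_mul, Matrix.smul_mul]
  have h4 : ∀ j j', (D • n) ⊗ₖ (m * (B j * Y j'))
      = (D * D) • ((D • (1 : Matrix S S ℂ)) ⊗ₖ (B j * Y j')) := by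
    intro j j'
    have : D • n = ∑ i, ∑ i', t i i' • (A i' * X i * n) := by
      rw [← Matrix.one_mul n, ← Matrix.smul_mul, ← hAX, Matrix.sum_mul]
      simp only [Matrix.sum_mul, Matrix.smul_mul, Matrix.one_mul]
    rw [this, ← hAX]
    simp only [sum_kron, Matrix.smul_kronecker, h3, Finset.smul_sum]
    simp only [smul_comm (D * D)]
  have h5 : ∀ e, e = D • (1 : Matrix S S ℂ) →
      (D • n) ⊗ₖ (D • m) = (D * D) • (e ⊗ₖ (D • (1 : Matrix S S ℂ))) := by
    intro e he
    have : D • m = ∑ j, ∑ j', s j j' • (m * (B j' * Y j)) := by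
      rw [← Matrix.mul_one m, ← Matrix.mul_smul, ← hBY, Matrix.mul_sum]
      simp only [Matrix.mul_sum, Matrix.mul_smul, Matrix.mul_one]
    conv_rhs => rw [← hBY]
    rw [this]
    simp only [kron_sum, Matrix.kronecker_smul, h4, Finset.smul_sum, ← he]
    simp only [smul_comm (D * D)]
  obtain ⟨o⟩ := ‹Nonempty S›
  have h6 : ∀ k l, n o o * m k l = D * D * (1 : Matrix S S ℂ) k l := by
    intro k l
    have := congrFun (congrFun (h5 _ rfl) (o, k)) (o, l)
    simp only [Matrix.kroneckerMap_apply, Matrix.smul_apply, smul_eq_mul, Matrix.one_apply_eq] at this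
    have hDD : D * D ≠ 0 := mul_ne_zero hD hD
    apply mul_left_cancel₀ hDD
    linear_combination this
  have hno : n o o ≠ 0 := by
    intro h
    have := h6 o o
    rw [h, zero_mul, Matrix.one_apply_eq, mul_one] at this
    exact mul_ne_zero hD hD this.symm
  have hmc : m = (D * D / n o o) • (1 : Matrix S S ℂ) := by
    ext k l
    rw [Matrix.smul_apply, smul_eq_mul, div_mul_eq_mul_div, ← h6 k l]
    field_simp
  have hfin : ∀ i i', vᴴ * ((X i * A i') ⊗ₖ (1 : Matrix S S ℂ)) * v
      = (D / n o o) • ((A i * X i') ⊗ₖ (1 : Matrix S S ℂ)) := by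
    intro i i'
    have := h1 i i'
    rw [hmc, Matrix.kronecker_smul] at this
    rw [← one_smul ℂ (_ * v), ← inv_mul_cancel₀ hD, ← smul_smul, this, smul_smul]
    congr 1
    field_simp
  refine ⟨D / n o o, ?_, hfin⟩
  generalize D / n o o = c at hfin
  have hcard : (Fintype.card S : ℂ) ≠ 0 := by
    have : Nonempty S := ⟨o⟩
    exact_mod_cast Fintype.card_ne_zero
  have htr : ∀ i i', (X i * A i').trace = c * (X i' * A i).trace := by
    intro i i'
    have := congrArg Matrix.trace (hfin i i')
    rw [Matrix.trace_mul_comm, ← Matrix.mul_assoc, hv', Matrix.one_mul, Matrix.trace_smul,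
      Matrix.trace_kronecker, Matrix.trace_kronecker, Matrix.trace_one, smul_eq_mul,
      Matrix.trace_mul_comm (A i), ← mul_assoc] at this
    exact mul_right_cancel₀ hcard this
  -- Applying `htr` twice gives `tr (X i A i') = c² tr (X i A i')`; not all of these traces vanish,
  -- because `∑ X Xᴴ` is a combination of the `X i A i'` and has nonzero trace.
  by_contra hc
  have hz : ∀ i i', (X i * A i').trace = 0 := by
    intro i i'
    have := htr i i'
    rw [htr i' i, ← mul_assoc] at this
    by_contra h0
    apply hc
    apply mul_right_cancel₀ h0
    rw [← this, one_mul]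
  have := congrArg Matrix.trace hX2
  simp only [hXA, Matrix.mul_sum, Matrix.mul_smul, Matrix.trace_sum, Matrix.trace_smul, hz,
    Finset.sum_const_zero, Matrix.trace_one, smul_eq_mul, mul_zero] at this
  exact mul_ne_zero hD hcard this.symm

end KeyLemma

/-! ### Slices of the relation and the transport identity -/

section Slices

variable {S : Type*} [Fintype S] [DecidableEq S]

/-- The operator on the second factor obtained by fixing matrix indices `a, b` on the first. -/
def rightPart (w : Matrix (S × S) (S × S) ℂ) (ab : S × S) : Matrix S S ℂ :=
  Matrix.of fun i j => w (ab.1, i) (ab.2, j)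

/-- The operator on the first factor obtained by fixing matrix indices `k, l` on the second. -/
def leftPart (w : Matrix (S × S) (S × S) ℂ) (kl : S × S) : Matrix S S ℂ :=
  Matrix.of fun i j => w (i, kl.1) (j, kl.2)

/-- The operator on factors 2, 3 obtained by fixing matrix indices on factors 1 and 4. -/
def slice (T : Matrix ((S × S) × S × S) ((S × S) × S × S) ℂ) (ab kl : S × S) :
    Matrix (S × S) (S × S) ℂ :=
  Matrix.of fun p q => T ((ab.1, p.1), (p.2, kl.1)) ((ab.2, q.1), (q.2, kl.2))

theorem slice_inj {T T' : Matrix ((S × S) × S × S) ((S × S) × S × S) ℂ}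
    (h : ∀ ab kl, slice T ab kl = slice T' ab kl) : T = T' := by
  ext ⟨⟨a, i⟩, j, k⟩ ⟨⟨b, i'⟩, j', l⟩
  exact congrFun (congrFun (h (a, b) (k, l)) (i, j)) (i', j')

theorem slice_lay23_mul (v : Matrix (S × S) (S × S) ℂ)
    (T : Matrix ((S × S) × S × S) ((S × S) × S × S) ℂ) (ab kl : S × S) :
    slice (lay23 v * T) ab kl = v * slice T ab kl := by
  ext ⟨i, j⟩ ⟨i', j'⟩
  simp only [slice, lay23, Matrix.of_apply, Matrix.mul_apply, Fintype.sum_prod_type, ite_and, ite_mul,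
    zero_mul, Finset.sum_ite_eq, Finset.sum_ite_irrel, Finset.sum_const_zero, Finset.mem_univ,
    if_true]

theorem slice_mul_lay23 (v : Matrix (S × S) (S × S) ℂ)
    (T : Matrix ((S × S) × S × S) ((S × S) × S × S) ℂ) (ab kl : S × S) :
    slice (T * lay23 v) ab kl = slice T ab kl * v := by
  ext ⟨i, j⟩ ⟨i', j'⟩
  simp only [slice, lay23, Matrix.of_apply, Matrix.mul_apply, Fintype.sum_prod_type, ite_and, mul_ite,
    mul_zero, Finset.sum_ite_eq', Finset.sum_ite_irrel, Finset.sum_const_zero, Finset.mem_univ,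
    if_true]

theorem slice_smul (c : ℂ) (T : Matrix ((S × S) × S × S) ((S × S) × S × S) ℂ) (ab kl : S × S) :
    slice (c • T) ab kl = c • slice T ab kl := rfl

theorem slice_lay12_mul_lay34 (w w' : Matrix (S × S) (S × S) ℂ) (ab kl : S × S) :
    slice (lay12 w * lay34 w') ab kl = rightPart w ab ⊗ₖ leftPart w' kl := by
  rw [lay12, lay34, ← Matrix.mul_kronecker_mul, Matrix.mul_one, Matrix.one_mul]
  rfl

theorem slice_lay12 (w : Matrix (S × S) (S × S) ℂ) (ab kl : S × S) :
    slice (lay12 w) ab kl =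
      (if kl.1 = kl.2 then (1 : ℂ) else 0) • (rightPart w ab ⊗ₖ (1 : Matrix S S ℂ)) := by
  ext ⟨i, j⟩ ⟨i', j'⟩
  simp only [slice, lay12, Matrix.of_apply, Matrix.kroneckerMap_apply, rightPart, Matrix.one_apply,
    Matrix.smul_apply, Prod.mk.injEq, smul_eq_mul]
  by_cases h : kl.1 = kl.2 <;> simp [h]

theorem rightPart_mul (w w' : Matrix (S × S) (S × S) ℂ) (ab : S × S) :
    rightPart (w * w') ab = ∑ c, rightPart w (ab.1, c) * rightPart w' (c, ab.2) := by
  ext i j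
  simp [rightPart, Matrix.mul_apply, Matrix.sum_apply, Fintype.sum_prod_type]

theorem lay12_mul (a b : Matrix (S × S) (S × S) ℂ) : lay12 (a * b) = lay12 a * lay12 b := by
  simp [lay12, ← Matrix.mul_kronecker_mul]

theorem lay34_mul (a b : Matrix (S × S) (S × S) ℂ) : lay34 (a * b) = lay34 a * lay34 b := by
  simp [lay34, ← Matrix.mul_kronecker_mul]

theorem lay12_one : lay12 (1 : Matrix (S × S) (S × S) ℂ) = 1 := by simp [lay12]

theorem lay34_one : lay34 (1 : Matrix (S × S) (S × S) ℂ) = 1 := by simp [lay34]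

theorem lay23_one : lay23 (1 : Matrix (S × S) (S × S) ℂ) = 1 := by
  ext ⟨⟨a, i⟩, j, k⟩ ⟨⟨b, i'⟩, j', l⟩
  simp only [lay23, Matrix.of_apply, Matrix.one_apply, Prod.mk.injEq, ← ite_and]
  congr 1
  simp only [eq_iff_iff]
  tauto

theorem lay23_mul (a b : Matrix (S × S) (S × S) ℂ) : lay23 (a * b) = lay23 a * lay23 b := by
  have h : ∀ w : Matrix (S × S) (S × S) ℂ, ∀ ab kl : S × S,
      slice (lay23 w) ab kl = w * slice 1 ab kl := by
    intro w ab kl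
    rw [← slice_lay23_mul, Matrix.mul_one]
  apply slice_inj
  intro ab kl
  rw [slice_lay23_mul, h, h, Matrix.mul_assoc]

theorem lay12_conjTranspose (a : Matrix (S × S) (S × S) ℂ) : (lay12 a)ᴴ = lay12 aᴴ := by
  simp [lay12, Matrix.conjTranspose_kronecker]

theorem lay23_conjTranspose (a : Matrix (S × S) (S × S) ℂ) : (lay23 a)ᴴ = lay23 aᴴ := by
  ext ⟨⟨a, i⟩, j, k⟩ ⟨⟨b, i'⟩, j', l⟩
  simp only [lay23, Matrix.conjTranspose_apply, Matrix.of_apply, eq_comm]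
  split_ifs <;> simp

theorem lay12_comm_lay34 (a b : Matrix (S × S) (S × S) ℂ) :
    lay12 a * lay34 b = lay34 b * lay12 a := by
  simp [lay12, lay34, ← Matrix.mul_kronecker_mul]

/-- Fixing a nonzero matrix entry of the factor of `xᴴ` in the sliced relation expresses each
`leftPart x ij` as a linear combination of the operators `leftPart u mn`. -/
theorem exists_coeff_left [Nonempty S] {u v x : Matrix (S × S) (S × S) ℂ} {σ : ℂ} (hσ : σ ≠ 0)
    (hx : x * xᴴ = 1)
    (hR : ∀ ab kl, v * (rightPart u ab ⊗ₖ leftPart u kl) * v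
      = σ • (rightPart x ab ⊗ₖ leftPart xᴴ kl)) :
    ∃ s : S × S → S × S → ℂ, ∀ ij, leftPart x ij = ∑ mn, s ij mn • leftPart u mn := by
  obtain ⟨kl, jj, hy⟩ : ∃ kl jj : S × S, leftPart xᴴ kl jj.1 jj.2 ≠ 0 := by
    by_contra! h
    have hz : xᴴ = 0 := by
      ext p q
      exact h (p.2, q.2) (p.1, q.1)
    obtain ⟨o⟩ := ‹Nonempty S›
    have := congrFun (congrFun hx (o, o)) (o, o)
    rw [hz, Matrix.mul_zero] at this
    simp at this
  refine ⟨fun ij mn => (σ * leftPart xᴴ kl jj.1 jj.2)⁻¹ * ∑ n, ∑ n',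
    v (ij.1, jj.1) (mn.1, n) * leftPart u kl n n' * v (mn.2, n') (ij.2, jj.2), fun ij => ?_⟩
  ext a b
  have h := congrFun (congrFun (hR (a, b) kl) (ij.1, jj.1)) (ij.2, jj.2)
  have hne : σ * leftPart xᴴ kl jj.1 jj.2 ≠ 0 := mul_ne_zero hσ hy
  apply mul_left_cancel₀ hne
  have h' : σ * leftPart xᴴ kl jj.1 jj.2 * leftPart x ij a b
      = (σ • (rightPart x (a, b) ⊗ₖ leftPart xᴴ kl)) (ij.1, jj.1) (ij.2, jj.2) := by
    simp only [Matrix.smul_apply, Matrix.kroneckerMap_apply, smul_eq_mul, rightPart, leftPart,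
      Matrix.of_apply]
    ring
  rw [h', ← h]
  simp only [Matrix.sum_apply, Matrix.smul_apply, smul_eq_mul, Finset.mul_sum, ← mul_assoc,
    mul_inv_cancel₀ hne, one_mul, Matrix.mul_apply, Fintype.sum_prod_type, Finset.sum_mul,
    Matrix.kroneckerMap_apply]
  rw [Finset.sum_congr rfl fun m' _ => Finset.sum_comm]
  rw [Finset.sum_comm]
  refine Finset.sum_congr rfl fun m _ => Finset.sum_congr rfl fun m' _ => ?_
  rw [Finset.sum_comm]
  refine Finset.sum_congr rfl fun n _ => Finset.sum_congr rfl fun n' _ => ?_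
  simp only [rightPart, leftPart, Matrix.of_apply]
  ring

/-- Mirror image of `exists_coeff_left`: a nonzero matrix entry of the factor of `x` expresses each
`rightPart xᴴ ij` as a linear combination of the operators `rightPart u mn`. -/
theorem exists_coeff_right [Nonempty S] {u v x : Matrix (S × S) (S × S) ℂ} {σ : ℂ} (hσ : σ ≠ 0)
    (hx : x * xᴴ = 1)
    (hR : ∀ ab kl, v * (rightPart u ab ⊗ₖ leftPart u kl) * v
      = σ • (rightPart x ab ⊗ₖ leftPart xᴴ kl)) :
    ∃ s : S × S → S × S → ℂ, ∀ ij, rightPart xᴴ ij = ∑ mn, s ij mn • rightPart u mn := by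
  obtain ⟨kl, jj, hy⟩ : ∃ kl jj : S × S, rightPart x kl jj.1 jj.2 ≠ 0 := by
    by_contra! h
    have hz : x = 0 := by
      ext p q
      exact h (p.1, q.1) (p.2, q.2)
    obtain ⟨o⟩ := ‹Nonempty S›
    have := congrFun (congrFun hx (o, o)) (o, o)
    rw [hz, Matrix.zero_mul] at this
    simp at this
  refine ⟨fun ij mn => (σ * rightPart x kl jj.1 jj.2)⁻¹ * ∑ n, ∑ n',
    v (jj.1, ij.1) (n, mn.1) * rightPart u kl n n' * v (n', mn.2) (jj.2, ij.2), fun ij => ?_⟩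
  ext a b
  have h := congrFun (congrFun (hR kl (a, b)) (jj.1, ij.1)) (jj.2, ij.2)
  have hne : σ * rightPart x kl jj.1 jj.2 ≠ 0 := mul_ne_zero hσ hy
  apply mul_left_cancel₀ hne
  have h' : σ * rightPart x kl jj.1 jj.2 * rightPart xᴴ ij a b
      = (σ • (rightPart x kl ⊗ₖ leftPart xᴴ (a, b))) (jj.1, ij.1) (jj.2, ij.2) := by
    simp only [Matrix.smul_apply, Matrix.kroneckerMap_apply, smul_eq_mul, rightPart, leftPart,
      Matrix.of_apply]
    ring
  rw [h', ← h]
  simp only [Matrix.sum_apply, Matrix.smul_apply, smul_eq_mul, Finset.mul_sum, ← mul_assoc,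
    mul_inv_cancel₀ hne, one_mul, Matrix.mul_apply, Fintype.sum_prod_type, Finset.sum_mul,
    Matrix.kroneckerMap_apply]
  rw [Finset.sum_comm]
  rw [Finset.sum_congr rfl fun m' _ => Finset.sum_congr rfl fun n' _ => Finset.sum_comm]
  rw [Finset.sum_congr rfl fun m' _ => Finset.sum_comm]
  rw [Finset.sum_comm]
  refine Finset.sum_congr rfl fun m _ => Finset.sum_congr rfl fun m' _ => ?_
  rw [Finset.sum_comm]
  refine Finset.sum_congr rfl fun n _ => Finset.sum_congr rfl fun n' _ => ?_
  simp only [rightPart, leftPart, Matrix.of_apply]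
  ring

theorem sum_rightPart (w w' : Matrix (S × S) (S × S) ℂ) (h : w * w' = 1) :
    ∑ ab : S × S, rightPart w ab * rightPart w' ab.swap = (Fintype.card S : ℂ) • 1 := by
  rw [Fintype.sum_prod_type]
  have : ∀ a : S, ∑ b, rightPart w (a, b) * rightPart w' (a, b).swap = 1 := by
    intro a
    have := rightPart_mul w w' (a, a)
    rw [h] at this
    simp only [Prod.swap_prod_mk]
    rw [← this]
    ext i j
    simp [rightPart, Matrix.one_apply]
  simp only [this, Finset.sum_const, Finset.card_univ]
  rw [← Nat.cast_smul_eq_nsmul ℂ]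

theorem leftPart_mul (w w' : Matrix (S × S) (S × S) ℂ) (ab : S × S) :
    leftPart (w * w') ab = ∑ c, leftPart w (ab.1, c) * leftPart w' (c, ab.2) := by
  ext i j
  simp only [leftPart, Matrix.mul_apply, Matrix.sum_apply, Fintype.sum_prod_type, Matrix.of_apply]
  exact Finset.sum_comm

theorem sum_leftPart (w w' : Matrix (S × S) (S × S) ℂ) (h : w * w' = 1) :
    ∑ ab : S × S, leftPart w ab * leftPart w' ab.swap = (Fintype.card S : ℂ) • 1 := by
  rw [Fintype.sum_prod_type]
  have : ∀ a : S, ∑ b, leftPart w (a, b) * leftPart w' (a, b).swap = 1 := by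
    intro a
    have := leftPart_mul w w' (a, a)
    rw [h] at this
    simp only [Prod.swap_prod_mk]
    rw [← this]
    ext i j
    simp [leftPart, Matrix.one_apply]
  simp only [this, Finset.sum_const, Finset.card_univ]
  rw [← Nat.cast_smul_eq_nsmul ℂ]

theorem rightPart_conjTranspose (w : Matrix (S × S) (S × S) ℂ) (ab : S × S) :
    (rightPart w ab)ᴴ = rightPart wᴴ ab.swap := rfl

theorem leftPart_conjTranspose (w : Matrix (S × S) (S × S) ℂ) (ab : S × S) :
    (leftPart w ab)ᴴ = leftPart wᴴ ab.swap := rfl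

theorem sum_swap' {M : Type*} [AddCommMonoid M] (f : S × S → M) : ∑ p : S × S, f p.swap = ∑ p, f p :=
  Equiv.sum_comp (Equiv.prodComm S S) f

/-- `v†₂₃ (x u)₁₂ v₂₃ = c (u x)₁₂` with `c² = 1`: the outcome of `exists_sign_of_families` for the
slices of `u`, `x` over the first factor and of `u`, `x†` over the last one. -/
theorem exists_sign [Nonempty S] {u v x : Matrix (S × S) (S × S) ℂ} {σ : ℂ} (hσ : σ * σ = 1)
    (hv : vᴴ * v = 1) (hv' : v * vᴴ = 1) (hx : xᴴ * x = 1) (hx' : x * xᴴ = 1)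
    (hrel : TRrel u v x σ) :
    ∃ c : ℂ, c * c = 1 ∧ lay23 vᴴ * lay12 (x * u) * lay23 v = c • lay12 (u * x) := by
  have hσ0 : σ ≠ 0 := by
    rintro rfl
    simp at hσ
  have hR : ∀ ab kl, v * (rightPart u ab ⊗ₖ leftPart u kl) * v
      = σ • (rightPart x ab ⊗ₖ leftPart xᴴ kl) := by
    intro ab kl
    rw [← slice_lay12_mul_lay34, ← slice_lay12_mul_lay34, ← slice_lay23_mul, ← slice_mul_lay23,
      ← slice_smul, ← Matrix.mul_assoc, show _ = _ from hrel, Matrix.smul_mul, Matrix.mul_assoc _ (lay23 vᴴ),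
      ← lay23_mul, hv, lay23_one, Matrix.mul_one]
  obtain ⟨s, hs⟩ := exists_coeff_left hσ0 hx' hR
  obtain ⟨t, ht⟩ := exists_coeff_right hσ0 hx' hR
  obtain ⟨c, hc, h⟩ := exists_sign_of_families v hv hv' (rightPart u) (rightPart x) (leftPart u)
    (leftPart xᴴ) σ hσ hR (Fintype.card S : ℂ) (by exact_mod_cast Fintype.card_ne_zero)
    (by
      rw [← sum_rightPart _ _ hx, ← sum_swap' fun ab => rightPart xᴴ ab * rightPart x ab.swap]
      rfl)
    (by rw [← sum_rightPart _ _ hx']; rfl)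
    (by
      rw [← sum_leftPart _ _ hx', ← sum_swap' fun ab => leftPart x ab * leftPart xᴴ ab.swap]
      simp only [leftPart_conjTranspose, Matrix.conjTranspose_conjTranspose, Prod.swap_swap])
    (by
      rw [← sum_leftPart _ _ hx]
      simp only [leftPart_conjTranspose, Matrix.conjTranspose_conjTranspose])
    (fun ab => t ab.swap) (fun ab => by rw [rightPart_conjTranspose, ht])
    (fun ab => s ab.swap)
    (fun ab => by rw [leftPart_conjTranspose, Matrix.conjTranspose_conjTranspose, hs])
  refine ⟨c, hc, slice_inj fun ab kl => ?_⟩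
  rw [slice_mul_lay23, slice_lay23_mul, slice_smul, slice_lay12, slice_lay12, rightPart_mul,
    rightPart_mul, sum_kron, sum_kron, Matrix.mul_smul, Matrix.smul_mul, smul_comm c,
    Matrix.mul_sum, Matrix.sum_mul, Finset.smul_sum (r := c)]
  simp only [h]

/-- The transport identity: `v₂₃ u₃₄` carries `x†` from the first two factors to the last two, at
the price of a sign `ε` and of the gates `u†₁₂ v†₂₃`. -/
theorem exists_transport_sign [Nonempty S] {u v x : Matrix (S × S) (S × S) ℂ} {σ : ℂ}
    (hσ : σ * σ = 1) (hu : u * uᴴ = 1)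
    (hv : vᴴ * v = 1) (hv' : v * vᴴ = 1) (hx : xᴴ * x = 1) (hx' : x * xᴴ = 1)
    (hrel : TRrel u v x σ) :
    ∃ ε : ℂ, ε * ε = 1 ∧
      lay23 v * lay34 u * lay12 xᴴ = ε • (lay34 xᴴ * lay12 uᴴ * lay23 vᴴ) := by
  obtain ⟨c, hc, h⟩ := exists_sign hσ hv hv' hx hx' hrel
  have hcs : star c = c := by
    rcases mul_self_eq_one_iff.mp hc with rfl | rfl <;> simp
  refine ⟨σ * c, by linear_combination c * c * hσ + hc, ?_⟩
  have h' := congrArg Matrix.conjTranspose h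
  simp only [Matrix.conjTranspose_mul, lay23_conjTranspose, lay12_conjTranspose,
    Matrix.conjTranspose_smul, hcs, Matrix.conjTranspose_conjTranspose, lay12_mul] at h'
  calc lay23 v * lay34 u * lay12 xᴴ
      = (lay23 v * lay12 u * lay34 u) * (lay12 uᴴ * lay12 xᴴ) := by
        rw [Matrix.mul_assoc (lay23 v) (lay12 u), lay12_comm_lay34]
        simp only [Matrix.mul_assoc]
        rw [← Matrix.mul_assoc (lay12 u), ← lay12_mul, hu, lay12_one, Matrix.one_mul]
    _ = σ • (lay12 x * lay34 xᴴ * ((lay23 vᴴ * ((lay12 uᴴ * lay12 xᴴ) * lay23 v)) * lay23 vᴴ)) := by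
        rw [show _ = _ from hrel, Matrix.smul_mul]
        simp only [Matrix.mul_assoc]
        rw [← lay23_mul, hv', lay23_one, Matrix.mul_one]
    _ = (σ * c) • (lay34 xᴴ * lay12 uᴴ * lay23 vᴴ) := by
        rw [h', Matrix.smul_mul, Matrix.mul_smul, smul_smul, lay12_comm_lay34]
        simp only [Matrix.mul_assoc]
        rw [← Matrix.mul_assoc (lay12 x), ← lay12_mul, hx', lay12_one, Matrix.one_mul]

end Slices

/-! ### Operators acting on a subset of the spins -/

section Embedding

variable {S : Type*} [Fintype S] [DecidableEq S]
variable {ι κ κ' : Type*} [Fintype ι] [DecidableEq ι] [Fintype κ] [DecidableEq κ]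
  [Fintype κ'] [DecidableEq κ']

open scoped Classical in
/-- The operator on the spins `ι` which acts as `A` on the spins `f k`, `k : κ`, and trivially on
the others. -/
noncomputable def emb (f : κ → ι) (A : Matrix (κ → S) (κ → S) ℂ) :
    Matrix (ι → S) (ι → S) ℂ :=
  Matrix.of fun p q => if ∀ l, l ∉ Set.range f → p l = q l then A (p ∘ f) (q ∘ f) else 0

open scoped Classical in
theorem sum_agree {f : κ → ι} (hf : f.Injective) (p : ι → S) (G : (ι → S) → ℂ) :
    ∑ r, (if ∀ l, l ∉ Set.range f → p l = r l then G r else 0)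
      = ∑ t, G (Function.extend f t p) := by
  rw [← Finset.sum_filter]
  refine Finset.sum_nbij' (fun r => r ∘ f) (fun t => Function.extend f t p) ?_ ?_ ?_ ?_ ?_
  · simp
  · intro t _
    simp only [Finset.mem_filter, Finset.mem_univ, true_and]
    intro l hl
    rw [Function.extend_apply' _ _ _ (by simpa using hl)]
  · intro r hr
    simp only [Finset.mem_filter, Finset.mem_univ, true_and] at hr
    funext l
    by_cases hl : l ∈ Set.range f
    · obtain ⟨k, rfl⟩ := hl
      rw [hf.extend_apply]; rfl
    · rw [Function.extend_apply' _ _ _ (by simpa using hl), hr l hl]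
  · intro t _
    funext k
    simp [hf.extend_apply]
  · intro r hr
    simp only [Finset.mem_filter, Finset.mem_univ, true_and] at hr
    congr 1
    funext l
    by_cases hl : l ∈ Set.range f
    · obtain ⟨k, rfl⟩ := hl
      rw [hf.extend_apply]; rfl
    · rw [Function.extend_apply' _ _ _ (by simpa using hl), hr l hl]

open scoped Classical in
theorem emb_mul_apply {f : κ → ι} (hf : f.Injective) (A : Matrix (κ → S) (κ → S) ℂ)
    (T : Matrix (ι → S) (ι → S) ℂ) (p q : ι → S) :
    (emb f A * T) p q = ∑ t, A (p ∘ f) t * T (Function.extend f t p) q := by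
  have := sum_agree hf p (fun r => A (p ∘ f) (r ∘ f) * T r q)
  rw [Matrix.mul_apply]
  simp only [emb, Matrix.of_apply, ite_mul, zero_mul]
  rw [this]
  refine Finset.sum_congr rfl fun t _ => ?_
  congr 2
  funext k
  simp [hf.extend_apply]

theorem emb_mul {f : κ → ι} (hf : f.Injective) (A B : Matrix (κ → S) (κ → S) ℂ) :
    emb f (A * B) = emb f A * emb f B := by
  ext p q
  rw [emb_mul_apply hf]
  have h1 : ∀ t : κ → S, (∀ l, l ∉ Set.range f → Function.extend f t p l = q l) ↔
      (∀ l, l ∉ Set.range f → p l = q l) := by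
    intro t
    refine forall_congr' fun l => forall_congr' fun hl => ?_
    rw [Function.extend_apply' _ _ _ (by simpa using hl)]
  have h2 : ∀ t : κ → S, Function.extend f t p ∘ f = t := by
    intro t
    funext k
    simp [hf.extend_apply]
  simp only [emb, Matrix.of_apply, h1, h2]
  split_ifs with h
  · rfl
  · simp

open scoped Classical in
theorem emb_mul_emb_apply {f : κ → ι} (hf : f.Injective) {g : κ' → ι}
    (hfg : ∀ k k', f k ≠ g k') (A : Matrix (κ → S) (κ → S) ℂ) (B : Matrix (κ' → S) (κ' → S) ℂ)
    (p q : ι → S) :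
    (emb f A * emb g B) p q =
      if ∀ l, l ∉ Set.range f → l ∉ Set.range g → p l = q l then
        A (p ∘ f) (q ∘ f) * B (p ∘ g) (q ∘ g) else 0 := by
  rw [emb_mul_apply hf, Finset.sum_eq_single (q ∘ f)]
  · have h1 : (∀ l, l ∉ Set.range g → Function.extend f (q ∘ f) p l = q l) ↔
        (∀ l, l ∉ Set.range f → l ∉ Set.range g → p l = q l) := by
      refine forall_congr' fun l => ?_
      by_cases hl : l ∈ Set.range f
      · obtain ⟨k, rfl⟩ := hl
        simp [hf.extend_apply]
      · rw [Function.extend_apply' _ _ _ (by simpa using hl)]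
        simp [hl]
    have h2 : Function.extend f (q ∘ f) p ∘ g = p ∘ g := by
      funext k'
      simp only [Function.comp_apply]
      rw [Function.extend_apply']
      rintro ⟨k, hk⟩
      exact hfg k k' hk
    simp only [emb, Matrix.of_apply, h1, h2]
    split_ifs <;> simp
  · intro t _ ht
    have : ¬ ∀ l, l ∉ Set.range g → Function.extend f t p l = q l := by
      intro h
      apply ht
      funext k
      have := h (f k) (by rintro ⟨k', hk'⟩; exact hfg k k' hk'.symm)
      rwa [hf.extend_apply] at this
    rw [show emb g B (Function.extend f t p) q = 0 from if_neg this, mul_zero]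
  · simp

theorem emb_comm {f : κ → ι} (hf : f.Injective) {g : κ' → ι} (hg : g.Injective)
    (hfg : ∀ k k', f k ≠ g k') (A : Matrix (κ → S) (κ → S) ℂ) (B : Matrix (κ' → S) (κ' → S) ℂ) :
    emb f A * emb g B = emb g B * emb f A := by
  ext p q
  rw [emb_mul_emb_apply hf hfg, emb_mul_emb_apply hg fun k k' h => hfg k' k h.symm, mul_comm]
  congr 1
  simp only [eq_iff_iff]
  exact forall_congr' fun l => by tauto

theorem emb_emb {f : κ → ι} (hf : f.Injective) (g : κ' → κ) (A : Matrix (κ' → S) (κ' → S) ℂ) :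
    emb f (emb g A) = emb (f ∘ g) A := by
  ext p q
  simp only [emb, Matrix.of_apply, ← ite_and]
  have : ((∀ l, l ∉ Set.range f → p l = q l) ∧
      ∀ l, l ∉ Set.range g → (p ∘ f) l = (q ∘ f) l) ↔
      ∀ l, l ∉ Set.range (f ∘ g) → p l = q l := by
    constructor
    · rintro ⟨h1, h2⟩ l hl
      by_cases h : l ∈ Set.range f
      · obtain ⟨k, rfl⟩ := h
        exact h2 k fun ⟨k', hk'⟩ => hl ⟨k', by simp [hk']⟩
      · exact h1 l h
    · intro h
      refine ⟨fun l hl => h l fun ⟨k', hk'⟩ => hl ⟨g k', hk'⟩, fun l hl => h (f l) ?_⟩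
      rintro ⟨k', hk'⟩
      exact hl ⟨k', hf hk'⟩
  simp only [this]
  rfl

theorem emb_one {f : κ → ι} : emb f (1 : Matrix (κ → S) (κ → S) ℂ) = 1 := by
  ext p q
  simp only [emb, Matrix.of_apply, Matrix.one_apply, ← ite_and]
  congr 1
  simp only [eq_iff_iff]
  constructor
  · rintro ⟨h1, h2⟩
    funext l
    by_cases hl : l ∈ Set.range f
    · obtain ⟨k, rfl⟩ := hl
      exact congrFun h2 k
    · exact h1 l hl
  · rintro rfl
    simp

theorem emb_conjTranspose (f : κ → ι) (A : Matrix (κ → S) (κ → S) ℂ) : (emb f A)ᴴ = emb f Aᴴ := by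
  ext p q
  simp only [emb, Matrix.conjTranspose_apply, Matrix.of_apply, eq_comm]
  split_ifs <;> simp

theorem emb_smul (f : κ → ι) (c : ℂ) (A : Matrix (κ → S) (κ → S) ℂ) :
    emb f (c • A) = c • emb f A := by
  ext p q
  simp only [emb, Matrix.smul_apply, Matrix.of_apply]
  split_ifs <;> simp

end Embedding

/-! ### The blocked relation on a chain -/

section Chain

variable {S : Type*} [Fintype S] [DecidableEq S]

/-- Operators on a chain of `n` spins. -/
abbrev Op (S : Type*) (n : ℕ) := Matrix (Fin n → S) (Fin n → S) ℂ

/-- The inclusion of the interval of sites `a, …, a + m - 1` into a chain of `n` sites. -/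
def sh (a m n : ℕ) (h : a + m ≤ n) (i : Fin m) : Fin n := ⟨a + i, by omega⟩

theorem sh_injective (a m n : ℕ) (h : a + m ≤ n) : (sh a m n h).Injective := by
  intro i j hij
  have := congrArg Fin.val hij
  simp only [sh] at this
  exact Fin.ext (by omega)

/-- `A` acting on the sites `a, …, a + m - 1` (counted from `0`) of a chain of `n` spins. -/
noncomputable def at' {m n : ℕ} (a : ℕ) (h : a + m ≤ n) (A : Op S m) : Op S n :=
  emb (sh a m n h) A

theorem at_mul {m n : ℕ} {a : ℕ} {h : a + m ≤ n} (A B : Op S m) :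
    at' a h (A * B) = at' a h A * at' a h B := emb_mul (sh_injective _ _ _ _) A B

theorem at_one {m n : ℕ} {a : ℕ} {h : a + m ≤ n} :
    at' a h (1 : Op S m) = 1 := emb_one

theorem at_smul {m n : ℕ} {a : ℕ} {h : a + m ≤ n} (c : ℂ) (A : Op S m) :
    at' a h (c • A) = c • at' a h A := emb_smul _ _ _

theorem at_conjTranspose {m n : ℕ} {a : ℕ} {h : a + m ≤ n} (A : Op S m) :
    (at' a h A)ᴴ = at' a h Aᴴ := emb_conjTranspose _ _

theorem at_at {l m n : ℕ} {a b : ℕ} {h : a + m ≤ n} {h' : b + l ≤ m} (A : Op S l) :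
    at' a h (at' b h' A) = at' (a + b) (by omega) A := by
  unfold at'
  rw [emb_emb (sh_injective _ _ _ _)]
  congr 1
  funext i
  simp [sh, add_assoc]

theorem at_at_eq {l m n : ℕ} {a b : ℕ} {h : a + m ≤ n} {h' : b + l ≤ m} (c : ℕ) (hc : a + b = c)
    (A : Op S l) :
    at' a h (at' b h' A) = at' c (by omega) A := by
  subst hc
  exact at_at A

theorem at_comm {l m n : ℕ} {a b : ℕ} {h : a + m ≤ n} {h' : b + l ≤ n} (hab : a + m ≤ b)
    (A : Op S m) (B : Op S l) : at' a h A * at' b h' B = at' b h' B * at' a h A := by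
  refine emb_comm (sh_injective _ _ _ _) (sh_injective _ _ _ _) ?_ A B
  intro i j hij
  have := congrArg Fin.val hij
  simp only [sh] at this
  omega

theorem at_zero_self {m : ℕ} {h : 0 + m ≤ m} (A : Op S m) : at' 0 h A = A := by
  have : sh 0 m m h = id := by
    funext i
    simp [sh]
  ext p q
  simp [at', emb, this]

/-- The blocked gate on `2 (j + 1)` spins, built by appending spins on the right. -/
noncomputable def blockU (u v : Op S 2) : (j : ℕ) → Op S (2 * (j + 1))
  | 0 => u
  | j + 1 => at' (2 * j + 1) (by omega) v * at' (2 * j + 2) (by omega) u *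
      at' 0 (by omega) (blockU u v j)

/-- The adjoint of the blocked `x`, built by prepending two spins on the left at each step: the
right-hand side of the transport identity, with `x†` replaced by the previous stage. -/
noncomputable def blockZ (u v x : Op S 2) : (j : ℕ) → Op S (2 * (j + 1))
  | 0 => xᴴ
  | j + 1 => at' 2 (by omega) (blockZ u v x j) * at' 0 (by omega) uᴴ * at' 1 (by omega) vᴴ

theorem blockU_succ (u v : Op S 2) (j : ℕ) :
    blockU u v (j + 1) = at' (2 * j + 1) (by omega) v * at' (2 * j + 2) (by omega) u *
      at' 0 (by omega) (blockU u v j) := rfl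

theorem blockZ_succ (u v x : Op S 2) (j : ℕ) :
    blockZ u v x (j + 1) =
      at' 2 (by omega) (blockZ u v x j) * at' 0 (by omega) uᴴ * at' 1 (by omega) vᴴ := rfl

theorem mul_swap_pairs {R : Type*} [Ring R] {a b c d w : R} (hac : c * a = a * c)
    (hbc : c * b = b * c) (had : d * a = a * d) (hbd : d * b = b * d) :
    a * b * (c * d * w) = c * d * (a * b * w) := by
  calc a * b * (c * d * w) = a * (b * c) * d * w := by noncomm_ring
    _ = (a * c) * (b * d) * w := by rw [← hbc]; noncomm_ring
    _ = c * (a * d) * b * w := by rw [← hac, ← hbd]; noncomm_ring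
    _ = c * d * (a * b * w) := by rw [← had]; noncomm_ring

/-- The blocked gate can equally be built by prepending spins on the left. -/
theorem blockU_succ_left (u v : Op S 2) (j : ℕ) :
    blockU u v (j + 1) = at' 1 (by omega) v * at' 0 (by omega) u *
      at' 2 (by omega) (blockU u v j) := by
  induction j with
  | zero =>
    simp only [blockU]
    rw [Matrix.mul_assoc, Matrix.mul_assoc, at_comm (a := 0) (b := 2) (by omega)]
  | succ j ih =>
    conv_lhs => rw [blockU, ih]
    simp only [at_mul]
    rw [at_at_eq 1 (by omega), at_at_eq 0 (by omega), at_at_eq 2 (by omega)]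
    conv_rhs => rw [blockU]
    simp only [at_mul]
    rw [at_at_eq (2 * (j + 1) + 1) (by omega), at_at_eq (2 * (j + 1) + 2) (by omega),
      at_at_eq 2 (by omega)]
    exact mul_swap_pairs (at_comm (by omega) _ _) (at_comm (by omega) _ _)
      (at_comm (by omega) _ _) (at_comm (by omega) _ _)

/-- The transport identity for `blockZ`: appending `v` and `u` on the right end turns `blockZ` at
stage `j` into `ε` times `blockZ` at stage `j + 1`. -/
theorem blockZ_transport (u v x : Op S 2) (ε : ℂ)
    (h0 : at' (n := 4) 1 (by omega) v * at' 2 (by omega) u * at' 0 (by omega) xᴴ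
      = ε • (at' 2 (by omega) xᴴ * at' 0 (by omega) uᴴ * at' 1 (by omega) vᴴ)) (j : ℕ) :
    at' (n := 2 * (j + 1 + 1)) (2 * j + 1) (by omega) v * at' (2 * j + 2) (by omega) u *
      at' 0 (by omega) (blockZ u v x j) = ε • blockZ u v x (j + 1) := by
  induction j with
  | zero => exact h0
  | succ j ih =>
    have ih' := congrArg (at' (n := 2 * (j + 1 + 1 + 1)) 2 (by omega)) ih
    simp only [at_mul, at_smul] at ih'
    rw [at_at_eq (2 * (j + 1) + 1) (by omega), at_at_eq (2 * (j + 1) + 2) (by omega),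
      at_at_eq 2 (by omega)] at ih'
    conv_lhs => rw [blockZ]
    conv_rhs => rw [blockZ]
    simp only [at_mul]
    rw [at_at_eq 2 (by omega), at_at_eq 0 (by omega), at_at_eq 1 (by omega)]
    simp only [← Matrix.mul_assoc]
    rw [ih', Matrix.smul_mul, Matrix.smul_mul]

/-- The induction step of `blockU_relation`, reduced to the commutations it uses. -/
theorem mul_rearrange {R : Type*} [Ring R] [Algebra ℂ R] {vm v₁ u₀ W₂ vr ur Wr Z₂ Zr Zn vm' : R}
    {c ε : ℂ} (ih : vm * W₂ * Wr = c • (Z₂ * Zr * vm')) (hZ : vr * ur * Zr = ε • Zn)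
    (h1 : v₁ * vm = vm * v₁) (h2 : u₀ * vm = vm * u₀) (h3 : vm * vr = vr * vm)
    (h4 : vm * ur = ur * vm) (h5 : W₂ * vr = vr * W₂) (h6 : W₂ * ur = ur * W₂)
    (h7 : Z₂ * vr = vr * Z₂) (h8 : Z₂ * ur = ur * Z₂) :
    vm * (v₁ * u₀ * W₂) * (vr * ur * Wr) = (c * ε) • (v₁ * u₀ * Z₂ * Zn * vm') := by
  calc vm * (v₁ * u₀ * W₂) * (vr * ur * Wr)
      = (vm * v₁) * u₀ * (W₂ * vr) * ur * Wr := by noncomm_ring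
    _ = v₁ * (vm * u₀) * vr * (W₂ * ur) * Wr := by rw [← h1, h5]; noncomm_ring
    _ = v₁ * u₀ * (vm * vr) * ur * W₂ * Wr := by rw [← h2, h6]; noncomm_ring
    _ = v₁ * u₀ * vr * (vm * ur) * W₂ * Wr := by rw [h3]; noncomm_ring
    _ = v₁ * u₀ * vr * ur * (vm * W₂ * Wr) := by rw [h4]; noncomm_ring
    _ = c • (v₁ * u₀ * vr * (ur * Z₂) * Zr * vm') := by
      rw [ih, mul_smul_comm]; congr 1; noncomm_ring
    _ = c • (v₁ * u₀ * (vr * Z₂) * ur * Zr * vm') := by rw [← h8]; congr 1; noncomm_ring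
    _ = c • (v₁ * u₀ * Z₂ * (vr * ur * Zr) * vm') := by rw [← h7]; congr 1; noncomm_ring
    _ = (c * ε) • (v₁ * u₀ * Z₂ * Zn * vm') := by
      rw [hZ, mul_smul_comm, smul_mul_assoc, smul_smul]

/-- The relation for blocks of `j + 1` spins. In the inductive step the left block gains two spins at
its left end (`blockU_succ_left`) and the right block two spins at its right end; the new gates of
the left block pass through, and those of the right block produce one factor `ε` by
`blockZ_transport`. -/
theorem blockU_relation (u v x : Op S 2) (σ ε : ℂ)
    (h0 : at' (n := 4) 1 (by omega) v * at' 2 (by omega) u * at' 0 (by omega) xᴴ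
      = ε • (at' 2 (by omega) xᴴ * at' 0 (by omega) uᴴ * at' 1 (by omega) vᴴ))
    (h1 : at' (n := 4) 1 (by omega) v * at' 0 (by omega) u * at' 2 (by omega) u
      = σ • (at' 0 (by omega) x * at' 2 (by omega) xᴴ * at' 1 (by omega) vᴴ)) (j : ℕ) :
    at' (n := 2 * (2 * (j + 1))) (2 * j + 1) (by omega) v * at' 0 (by omega) (blockU u v j) *
        at' (2 * (j + 1)) (by omega) (blockU u v j)
      = (σ * ε ^ j) • (at' 0 (by omega) (blockZ u v x j)ᴴ *
        at' (2 * (j + 1)) (by omega) (blockZ u v x j) * at' (2 * j + 1) (by omega) vᴴ) := by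
  induction j with
  | zero =>
    simpa only [blockU, blockZ, pow_zero, mul_one, Matrix.conjTranspose_conjTranspose] using h1
  | succ j ih =>
    have ih' := congrArg (at' (n := 2 * (2 * (j + 1 + 1))) 2 (by omega)) ih
    have hZ := congrArg (at' (n := 2 * (2 * (j + 1 + 1))) (2 * (j + 1 + 1)) (by omega))
      (blockZ_transport u v x ε h0 j)
    simp only [at_mul, at_smul] at ih' hZ
    rw [at_at_eq (2 * (j + 1) + 1) (by omega), at_at_eq 2 (by omega),
      at_at_eq (2 * (j + 1 + 1)) (by omega), at_at_eq 2 (by omega),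
      at_at_eq (2 * (j + 1 + 1)) (by omega), at_at_eq (2 * (j + 1) + 1) (by omega)] at ih'
    rw [at_at_eq (4 * j + 5) (by omega), at_at_eq (4 * j + 6) (by omega),
      at_at_eq (2 * (j + 1 + 1)) (by omega)] at hZ
    have hL := congrArg (at' (n := 2 * (2 * (j + 1 + 1))) 0 (by omega)) (blockU_succ_left u v j)
    have hR := congrArg (at' (n := 2 * (2 * (j + 1 + 1))) (2 * (j + 1 + 1)) (by omega))
      (blockU_succ u v j)
    simp only [at_mul] at hL hR
    rw [at_at_eq 1 (by omega), at_at_eq 0 (by omega), at_at_eq 2 (by omega)] at hL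
    rw [at_at_eq (4 * j + 5) (by omega), at_at_eq (4 * j + 6) (by omega),
      at_at_eq (2 * (j + 1 + 1)) (by omega)] at hR
    have hX := congrArg (fun m => at' (n := 2 * (2 * (j + 1 + 1))) 0 (by omega) mᴴ)
      (blockZ_succ u v x j)
    simp only [Matrix.conjTranspose_mul, at_conjTranspose, Matrix.conjTranspose_conjTranspose,
      at_mul] at hX
    rw [at_at_eq 1 (by omega), at_at_eq 0 (by omega), at_at_eq 2 (by omega)] at hX
    rw [hX, hL, hR, pow_succ, ← mul_assoc σ, ← Matrix.mul_assoc (at' 1 _ v)]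
    exact mul_rearrange ih' hZ (at_comm (by omega) _ _) (at_comm (by omega) _ _)
      (at_comm (by omega) _ _) (at_comm (by omega) _ _) (at_comm (by omega) _ _)
      (at_comm (by omega) _ _) (at_comm (by omega) _ _) (at_comm (by omega) _ _)

end Chain

/-! ### From tensor products of blocks to chains -/

section Transfer

variable {S : Type*} [Fintype S] [DecidableEq S]

/-- Concatenation of two chains of `n` spins. -/
def glue (S : Type*) (n : ℕ) : (Fin n → S) × (Fin n → S) ≃ (Fin (2 * n) → S) where
  toFun p j := if h : j.val < n then p.1 ⟨j.val, h⟩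
    else p.2 ⟨j.val - n, by have := j.isLt; omega⟩
  invFun r := (fun i => r ⟨i, by omega⟩, fun i => r ⟨n + i, by omega⟩)
  left_inv p := by
    ext i <;> simp
  right_inv r := by
    funext j
    by_cases h : j.val < n
    · simp [h]
    · simp only [h, dite_false]
      congr 1
      exact Fin.ext (by simp only; omega)

theorem glue_of_lt {n : ℕ} (a b : Fin n → S) (l : Fin (2 * n)) (h : l.val < n) :
    glue S n (a, b) l = a ⟨l, h⟩ := dif_pos h

theorem glue_of_eq_add {n : ℕ} (a b : Fin n → S) (l : Fin (2 * n)) (i : Fin n)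
    (h : l.val = n + i) : glue S n (a, b) l = b i := by
  have : ¬ l.val < n := by omega
  simp only [glue, Equiv.coe_fn_mk, this, dite_false]
  congr 1
  exact Fin.ext (show l.val - n = i.val by omega)

theorem mem_range_sh {a m n : ℕ} {h : a + m ≤ n} (l : Fin n) :
    l ∈ Set.range (sh a m n h) ↔ a ≤ l.val ∧ l.val < a + m := by
  constructor
  · rintro ⟨i, rfl⟩
    simp only [sh]
    omega
  · intro hl
    exact ⟨⟨l - a, by omega⟩, Fin.ext (by simp only [sh]; omega)⟩

/-- Entries of `at'`, with the condition of agreement off the interval replaced by an equivalent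
one. -/
theorem at_apply_of {m n a : ℕ} {h : a + m ≤ n} (A : Op S m) (p q : Fin n → S) {P : Prop}
    [Decidable P]
    (hP : (∀ l : Fin n, ¬ (a ≤ l.val ∧ l.val < a + m) → p l = q l) ↔ P) :
    at' a h A p q = if P then A (p ∘ sh a m n h) (q ∘ sh a m n h) else 0 := by
  classical
  simp only [at', emb, Matrix.of_apply, mem_range_sh]
  by_cases hh : P
  · rw [if_pos hh, if_pos (hP.2 hh)]
  · rw [if_neg hh, if_neg (mt hP.1 hh)]

variable {α : Type*} [Fintype α] [DecidableEq α] {k : ℕ}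

/-- The identification of two blocks of `k` spins with a chain of `2k` spins. -/
def two (e : α ≃ (Fin k → S)) : α × α ≃ (Fin (2 * k) → S) :=
  (Equiv.prodCongr e e).trans (glue S k)

/-- The identification of four blocks of `k` spins with a chain of `4k` spins. -/
def four (e : α ≃ (Fin k → S)) : (α × α) × α × α ≃ (Fin (2 * (2 * k)) → S) :=
  two (two e)

theorem glue_sh_zero {n : ℕ} {h : 0 + n ≤ 2 * n} (a b : Fin n → S) :
    glue S n (a, b) ∘ sh 0 n (2 * n) h = a := by
  funext i
  rw [Function.comp_apply, glue_of_lt _ _ _ (by simp [sh])]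
  simp [sh]

theorem glue_sh_self {n : ℕ} {h : n + n ≤ 2 * n} (a b : Fin n → S) :
    glue S n (a, b) ∘ sh n n (2 * n) h = b := by
  funext i
  rw [Function.comp_apply, glue_of_eq_add _ _ _ i rfl]

theorem glue_sh_middle {n : ℕ} {h : n + 2 * n ≤ 2 * (2 * n)} (a b c d : Fin n → S) :
    glue S (2 * n) (glue S n (a, b), glue S n (c, d)) ∘ sh n (2 * n) (2 * (2 * n)) h
      = glue S n (b, c) := by
  funext i
  rw [Function.comp_apply]
  by_cases hi : i.val < n
  · rw [glue_of_lt _ _ _ hi, glue_of_lt _ _ _ (show n + i.val < _ by omega), glue_of_eq_add _ _ _ ⟨i, hi⟩ rfl]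
  · rw [glue_of_eq_add b c i ⟨i - n, by omega⟩ (by simp only; omega),
      glue_of_eq_add _ _ _ ⟨i - n, by omega⟩ (by simp only [sh]; omega),
      glue_of_lt _ _ _ (by simp only; omega)]

theorem reindex_lay12 (e : α ≃ (Fin k → S)) (w : Matrix (α × α) (α × α) ℂ) :
    Matrix.reindex (four e) (four e) (lay12 w)
      = at' 0 (by omega) (Matrix.reindex (two e) (two e) w) := by
  ext p' q'
  obtain ⟨⟨p₁, p₂⟩, rfl⟩ := (four e).surjective p'
  obtain ⟨⟨q₁, q₂⟩, rfl⟩ := (four e).surjective q'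
  have key : ∀ p₁ p₂, four e (p₁, p₂) = glue S (2 * k) (two e p₁, two e p₂) := fun _ _ => rfl
  rw [at_apply_of (P := p₂ = q₂), key, key, glue_sh_zero, glue_sh_zero, ← key, ← key]
  · simp [lay12, Matrix.one_apply]
  · rw [key, key]
    constructor
    · intro h
      apply (two e).injective
      funext i
      have := h ⟨2 * k + i, by omega⟩ (by simp only; omega)
      rwa [glue_of_eq_add _ _ _ i rfl, glue_of_eq_add _ _ _ i rfl] at this
    · rintro rfl l hl
      rw [glue_of_eq_add _ _ l ⟨l - 2 * k, by omega⟩ (by simp only; omega),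
        glue_of_eq_add _ _ l ⟨l - 2 * k, by omega⟩ (by simp only; omega)]

theorem reindex_lay34 (e : α ≃ (Fin k → S)) (w : Matrix (α × α) (α × α) ℂ) :
    Matrix.reindex (four e) (four e) (lay34 w)
      = at' (2 * k) (by omega) (Matrix.reindex (two e) (two e) w) := by
  ext p' q'
  obtain ⟨⟨p₁, p₂⟩, rfl⟩ := (four e).surjective p'
  obtain ⟨⟨q₁, q₂⟩, rfl⟩ := (four e).surjective q'
  have key : ∀ p₁ p₂, four e (p₁, p₂) = glue S (2 * k) (two e p₁, two e p₂) := fun _ _ => rfl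
  rw [at_apply_of (P := p₁ = q₁), key, key, glue_sh_self, glue_sh_self, ← key, ← key]
  · simp [lay34, Matrix.one_apply]
  · rw [key, key]
    constructor
    · intro h
      apply (two e).injective
      funext i
      have := h ⟨i, by omega⟩ (by simp only; omega)
      rwa [glue_of_lt _ _ _ i.isLt, glue_of_lt _ _ _ i.isLt] at this
    · rintro rfl l hl
      rw [glue_of_lt _ _ l (by omega), glue_of_lt _ _ l (by omega)]

theorem reindex_lay23 (e : α ≃ (Fin k → S)) (w : Matrix (α × α) (α × α) ℂ) :
    Matrix.reindex (four e) (four e) (lay23 w)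
      = at' k (by omega) (Matrix.reindex (two e) (two e) w) := by
  ext p' q'
  obtain ⟨⟨⟨a, b⟩, c, d⟩, rfl⟩ := (four e).surjective p'
  obtain ⟨⟨⟨a', b'⟩, c', d'⟩, rfl⟩ := (four e).surjective q'
  have key : ∀ a b c d, four e ((a, b), (c, d))
      = glue S (2 * k) (glue S k (e a, e b), glue S k (e c, e d)) := fun _ _ _ _ => rfl
  have key' : ∀ b c, glue S k (e b, e c) = two e (b, c) := fun _ _ => rfl
  rw [at_apply_of (P := a = a' ∧ d = d'), key, key, glue_sh_middle, glue_sh_middle, ← key, ← key,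
    key', key']
  · simp [lay23]
  · rw [key, key]
    constructor
    · intro h
      constructor
      · apply e.injective
        funext i
        have := h ⟨i, by omega⟩ (by simp only; omega)
        have hi : i.val < 2 * k := by omega
        rwa [glue_of_lt _ _ _ hi, glue_of_lt _ _ _ i.isLt, glue_of_lt _ _ _ hi,
          glue_of_lt _ _ _ i.isLt] at this
      · apply e.injective
        funext i
        have := h ⟨2 * k + (k + i), by omega⟩ (by simp only; omega)
        rwa [glue_of_eq_add _ _ _ ⟨k + i, by omega⟩ rfl, glue_of_eq_add _ _ _ i rfl,
          glue_of_eq_add _ _ _ ⟨k + i, by omega⟩ rfl, glue_of_eq_add _ _ _ i rfl] at this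
    · rintro ⟨rfl, rfl⟩ l hl
      by_cases hlk : l.val < k
      · have hi : l.val < 2 * k := by omega
        rw [glue_of_lt _ _ _ hi, glue_of_lt _ _ _ hlk, glue_of_lt _ _ _ hi, glue_of_lt _ _ _ hlk]
      · have h1 : l.val = 2 * k + (⟨l - 2 * k, by omega⟩ : Fin (2 * k)) := by simp only; omega
        have h2 : (⟨l - 2 * k, by omega⟩ : Fin (2 * k)).val = k + (⟨l - 3 * k, by omega⟩ : Fin k) := by
          simp only; omega
        rw [glue_of_eq_add _ _ _ _ h1, glue_of_eq_add _ _ _ _ h2, glue_of_eq_add _ _ _ _ h1,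
          glue_of_eq_add _ _ _ _ h2]

theorem reindex_mul {m n : Type*} [Fintype m] [Fintype n] (e : m ≃ n) (A B : Matrix m m ℂ) :
    Matrix.reindex e e (A * B) = Matrix.reindex e e A * Matrix.reindex e e B :=
  (Matrix.submatrix_mul_equiv A B e.symm e.symm e.symm).symm

theorem reindex_smul {m n : Type*} (e : m ≃ n) (c : ℂ) (A : Matrix m m ℂ) :
    Matrix.reindex e e (c • A) = c • Matrix.reindex e e A := rfl

/-- The time-reversal relation, read on a chain of `4k` spins. -/
theorem trrel_iff (e : α ≃ (Fin k → S)) (u v x : Matrix (α × α) (α × α) ℂ) (σ : ℂ) :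
    TRrel u v x σ ↔
      at' (n := 2 * (2 * k)) k (by omega) (Matrix.reindex (two e) (two e) v) *
          at' 0 (by omega) (Matrix.reindex (two e) (two e) u) *
          at' (2 * k) (by omega) (Matrix.reindex (two e) (two e) u)
        = σ • (at' 0 (by omega) (Matrix.reindex (two e) (two e) x) *
          at' (2 * k) (by omega) (Matrix.reindex (two e) (two e) x)ᴴ *
          at' k (by omega) (Matrix.reindex (two e) (two e) v)ᴴ) := by
  rw [TRrel, ← (Matrix.reindex (four e) (four e)).injective.eq_iff]
  simp only [reindex_mul, reindex_smul, reindex_lay12, reindex_lay23, reindex_lay34,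
    Matrix.conjTranspose_reindex]

end Transfer

/-! ### The blocked gates as chain operators -/

section Blocks

variable {S : Type*} [Fintype S] [DecidableEq S]

/-- A two-spin gate as an operator on a chain of two spins. -/
def gate (g : Matrix (S × S) (S × S) ℂ) : Op S 2 :=
  Matrix.of fun p q => g (p 0, p 1) (q 0, q 1)

theorem reindex_eq_gate (g : Matrix (S × S) (S × S) ℂ) :
    Matrix.reindex (two (Equiv.funUnique (Fin 1) S).symm) (two (Equiv.funUnique (Fin 1) S).symm) g
      = gate g := by
  ext p q
  rfl

/-- The layer `g^{⊗n}` on `2n` spins, acting on the pairs of sites `(2s, 2s+1)`. -/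
def layer (g : Matrix (S × S) (S × S) ℂ) (n : ℕ) : Op S (2 * n) :=
  Matrix.of fun p q => ∏ s : Fin n,
    g (p ⟨2 * s, by omega⟩, p ⟨2 * s + 1, by omega⟩) (q ⟨2 * s, by omega⟩, q ⟨2 * s + 1, by omega⟩)

theorem layer_succ (g : Matrix (S × S) (S × S) ℂ) (n : ℕ) :
    layer g (n + 1) = at' 0 (by omega) (layer g n) * at' (2 * n) (by omega) (gate g) := by
  ext p q
  unfold at'
  rw [emb_mul_emb_apply (sh_injective _ _ _ _), if_pos]
  · simp only [layer, Matrix.of_apply, Fin.prod_univ_castSucc, gate, Function.comp_apply, sh]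
    simp
  · intro l h1 h2
    rw [mem_range_sh] at h1 h2
    omega
  · intro i j hij
    have := congrArg Fin.val hij
    simp only [sh] at this
    omega

theorem layer_zero (g : Matrix (S × S) (S × S) ℂ) : layer g 0 = 1 := by
  ext p q
  have : p = q := funext fun l => absurd l.isLt (by omega)
  subst this
  simp [layer]

theorem layer_one (g : Matrix (S × S) (S × S) ℂ) : layer g 1 = gate g := by
  ext p q
  simp [layer, gate]

/-- The recursively built gate is the two-layer circuit `(1 ⊗ v^{⊗j} ⊗ 1) u^{⊗(j+1)}`. -/
theorem blockU_eq_layers (u v : Matrix (S × S) (S × S) ℂ) (j : ℕ) :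
    blockU (gate u) (gate v) j = at' 1 (by omega) (layer v j) * layer u (j + 1) := by
  induction j with
  | zero =>
    rw [layer_zero, at_one, Matrix.one_mul, layer_one]
    rfl
  | succ j ih =>
    rw [blockU_succ, ih, layer_succ u (j + 1), layer_succ v j]
    simp only [at_mul]
    rw [at_at_eq 1 (by omega), at_at_eq 1 (by omega), at_at_eq (2 * j + 1) (by omega)]
    rw [at_comm (a := 1) (b := 2 * j + 1) (by omega),
      at_comm (a := 0) (b := 2 * (j + 1)) (m := 2 * (j + 1)) (by omega)]
    simp only [Matrix.mul_assoc]
    rw [← Matrix.mul_assoc (at' (2 * j + 2) _ (gate u)),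
      ← at_comm (a := 1) (b := 2 * j + 2) (by omega)]
    simp only [Matrix.mul_assoc]
    rfl

/-- Grouping the sites of a chain of `2k` spins into the pairs `(2s, 2s+1)`. -/
def pairing (S : Type*) (k : ℕ) : (Fin k → S × S) ≃ (Fin (2 * k) → S) where
  toFun z l := if l.val % 2 = 0 then (z ⟨l / 2, by omega⟩).1 else (z ⟨l / 2, by omega⟩).2
  invFun t s := (t ⟨2 * s, by omega⟩, t ⟨2 * s + 1, by omega⟩)
  left_inv z := by
    funext s
    have h : (2 * s.val + 1) / 2 = s := by omega
    ext <;> simp [h]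
  right_inv t := by
    funext l
    by_cases h : l.val % 2 = 0
    · simp only [h, if_true]
      congr 1
      exact Fin.ext (by simp only; omega)
    · simp only [h, if_false]
      congr 1
      exact Fin.ext (by simp only; omega)

theorem sp_eq {d k : ℕ} (p : (Fin k → Fin d) × (Fin k → Fin d)) :
    two (Equiv.refl (Fin k → Fin d)) p = sp p := rfl

theorem reindex_vblk (d j : ℕ) (v : Matrix (Fin d × Fin d) (Fin d × Fin d) ℂ) :
    Matrix.reindex (two (Equiv.refl _)) (two (Equiv.refl _)) (vblk d (j + 1) v)
      = at' j (by omega) (gate v) := by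
  ext p' q'
  obtain ⟨p, rfl⟩ := (two (Equiv.refl (Fin (j + 1) → Fin d))).surjective p'
  obtain ⟨q, rfl⟩ := (two (Equiv.refl (Fin (j + 1) → Fin d))).surjective q'
  rw [at_apply_of (P := ∀ i : Fin (2 * (j + 1)), i.val ≠ j + 1 - 1 → i.val ≠ j + 1 → sp p i = sp q i)]
  · rw [Matrix.reindex_apply, Matrix.submatrix_apply, Equiv.symm_apply_apply,
      Equiv.symm_apply_apply]
    simp only [vblk, Matrix.of_apply, Nat.succ_pos, dite_true, ite_mul, one_mul, zero_mul]
    rfl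
  · refine forall_congr' fun l => ?_
    rw [sp_eq, sp_eq]
    constructor
    · intro h h1 h2
      exact h (by omega)
    · intro h h1
      exact h (by omega) (by omega)

theorem reindex_ublk (d j : ℕ) (u v : Matrix (Fin d × Fin d) (Fin d × Fin d) ℂ) :
    Matrix.reindex (two (Equiv.refl _)) (two (Equiv.refl _)) (ublk d (j + 1) u v)
      = blockU (gate u) (gate v) j := by
  ext p' q'
  obtain ⟨p, rfl⟩ := (two (Equiv.refl (Fin (j + 1) → Fin d))).surjective p'
  obtain ⟨q, rfl⟩ := (two (Equiv.refl (Fin (j + 1) → Fin d))).surjective q'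
  rw [blockU_eq_layers, Matrix.mul_apply, Matrix.reindex_apply, Matrix.submatrix_apply,
    Equiv.symm_apply_apply, Equiv.symm_apply_apply, sp_eq, sp_eq]
  simp only [ublk, Matrix.of_apply, Nat.succ_pos, dite_true]
  refine Fintype.sum_equiv (pairing (Fin d) (j + 1)) _ _ fun z => ?_
  obtain ⟨t, rfl⟩ := (pairing (Fin d) (j + 1)).symm.surjective z
  rw [Equiv.apply_symm_apply]
  rw [at_apply_of (P := sp p ⟨0, by omega⟩ = t ⟨0, by omega⟩ ∧
    sp p ⟨2 * (j + 1) - 1, by omega⟩ = t ⟨2 * j + 1, by omega⟩)]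
  · have hlast : ((pairing (Fin d) (j + 1)).symm t ⟨j + 1 - 1, by omega⟩).2
        = t ⟨2 * j + 1, by omega⟩ := rfl
    have hfirst : ((pairing (Fin d) (j + 1)).symm t ⟨0, by omega⟩).1
        = t ⟨0, by omega⟩ := rfl
    rw [hlast, hfirst]
    split_ifs with h
    · rw [one_mul]
      congr 1
      simp only [layer, Matrix.of_apply]
      refine Finset.prod_congr rfl fun s _ => ?_
      simp only [Function.comp_apply, sh, pairing, Equiv.coe_fn_symm_mk]
      congr 2 <;> congr 1 <;> exact Fin.ext (by simp only; omega)
    · simp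
  · constructor
    · intro h
      exact ⟨h _ (by simp only; omega), h ⟨2 * j + 1, by omega⟩ (by simp only; omega)⟩
    · rintro ⟨h1, h2⟩ l hl
      have : l.val = 0 ∨ l.val = 2 * j + 1 := by omega
      rcases this with h | h
      · rw [show l = ⟨0, by omega⟩ from Fin.ext h]
        exact h1
      · rw [show l = ⟨2 * j + 1, by omega⟩ from Fin.ext h]
        exact h2

theorem blockZ_unitary {u v x : Op S 2} (hu : u ∈ Matrix.unitaryGroup (Fin 2 → S) ℂ)
    (hv : v ∈ Matrix.unitaryGroup (Fin 2 → S) ℂ) (hx : x ∈ Matrix.unitaryGroup (Fin 2 → S) ℂ)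
    (j : ℕ) : blockZ u v x j ∈ Matrix.unitaryGroup (Fin (2 * (j + 1)) → S) ℂ := by
  have hat : ∀ {m n a : ℕ} {h : a + m ≤ n} {A : Op S m}, A ∈ Matrix.unitaryGroup (Fin m → S) ℂ →
      at' a h A ∈ Matrix.unitaryGroup (Fin n → S) ℂ := by
    intro m n a h A hA
    rw [Matrix.mem_unitaryGroup_iff, Matrix.star_eq_conjTranspose] at hA ⊢
    rw [at_conjTranspose, ← at_mul, hA, at_one]
  have hstar : ∀ {m : ℕ} {A : Op S m}, A ∈ Matrix.unitaryGroup (Fin m → S) ℂ →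
      Aᴴ ∈ Matrix.unitaryGroup (Fin m → S) ℂ := fun hA => Unitary.star_mem hA
  induction j with
  | zero => exact hstar hx
  | succ j ih => exact mul_mem (mul_mem (hat ih) (hat (hstar hu))) (hat (hstar hv))

theorem reindex_unitary {m n : Type*} [Fintype m] [Fintype n] [DecidableEq m] [DecidableEq n]
    (e : m ≃ n) {A : Matrix m m ℂ} (hA : A ∈ Matrix.unitaryGroup m ℂ) :
    Matrix.reindex e e A ∈ Matrix.unitaryGroup n ℂ := by
  rw [Matrix.mem_unitaryGroup_iff, Matrix.star_eq_conjTranspose] at hA ⊢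
  rw [Matrix.conjTranspose_reindex, ← reindex_mul, hA]
  simp

end Blocks

/-- If the time-reversal relation holds for `(u,v)` with sign `σ = σ^{(1)}`, then for every
`k ≥ 1` the `k`-fold blocked pair satisfies the relation with a sign `σ^{(k)}`, and
`σ^{(k)} = σ^{(1)}` for `k` odd, `σ^{(k)} = σ^{(2)}` for `k` even. -/
theorem stmt18 (d : ℕ) (hd : 1 ≤ d)
    (u v : Matrix (Fin d × Fin d) (Fin d × Fin d) ℂ)
    (hu : u ∈ Matrix.unitaryGroup (Fin d × Fin d) ℂ)
    (hv : v ∈ Matrix.unitaryGroup (Fin d × Fin d) ℂ)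
    (x : Matrix (Fin d × Fin d) (Fin d × Fin d) ℂ)
    (hx : x ∈ Matrix.unitaryGroup (Fin d × Fin d) ℂ)
    (σ : ℂ) (hσ : σ = 1 ∨ σ = -1)
    (hrel : TRrel u v x σ) :
    ∃ σ₂ : ℂ, (σ₂ = 1 ∨ σ₂ = -1) ∧
      ∀ k : ℕ, 1 ≤ k →
        ∃ xk : Matrix ((Fin k → Fin d) × (Fin k → Fin d))
            ((Fin k → Fin d) × (Fin k → Fin d)) ℂ,
          xk ∈ Matrix.unitaryGroup ((Fin k → Fin d) × (Fin k → Fin d)) ℂ ∧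
          TRrel (ublk d k u v) (vblk d k v) xk (if Odd k then σ else σ₂) := by
  have : Nonempty (Fin d) := ⟨⟨0, hd⟩⟩
  have hσ' : σ * σ = 1 := mul_self_eq_one_iff.mpr hσ
  have hu' : u * uᴴ = 1 := Matrix.mem_unitaryGroup_iff.mp hu
  have hv' : v * vᴴ = 1 := Matrix.mem_unitaryGroup_iff.mp hv
  have hv'' : vᴴ * v = 1 := Matrix.mem_unitaryGroup_iff'.mp hv
  have hx' : x * xᴴ = 1 := Matrix.mem_unitaryGroup_iff.mp hx
  have hx'' : xᴴ * x = 1 := Matrix.mem_unitaryGroup_iff'.mp hx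
  obtain ⟨ε, hε, htr⟩ := exists_transport_sign hσ' hu' hv'' hv' hx'' hx' hrel
  refine ⟨σ * ε, mul_self_eq_one_iff.mp (by linear_combination ε * ε * hσ' + hε), ?_⟩
  intro k hk
  obtain ⟨j, rfl⟩ : ∃ j, k = j + 1 := ⟨k - 1, by omega⟩
  have hsign : (if Odd (j + 1) then σ else σ * ε) = σ * ε ^ j := by
    rcases Nat.even_or_odd' j with ⟨i, rfl | rfl⟩
    · rw [if_pos ⟨i, rfl⟩, pow_mul, pow_two, hε, one_pow, mul_one]
    · rw [if_neg (by rw [Nat.not_odd_iff_even]; exact ⟨i + 1, by ring⟩), pow_succ, pow_mul, pow_two,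
        hε, one_pow, one_mul]
  let e₁ : Fin d ≃ (Fin 1 → Fin d) := (Equiv.funUnique (Fin 1) (Fin d)).symm
  have h1 := (trrel_iff e₁ u v x σ).mp hrel
  have h0 := congrArg (Matrix.reindex (four e₁) (four e₁)) htr
  simp only [reindex_mul, reindex_smul, reindex_lay12, reindex_lay23, reindex_lay34,
    ← Matrix.conjTranspose_reindex] at h0
  simp only [e₁, reindex_eq_gate] at h0 h1
  have hgate : ∀ {g : Matrix (Fin d × Fin d) (Fin d × Fin d) ℂ},
      g ∈ Matrix.unitaryGroup (Fin d × Fin d) ℂ →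
      gate g ∈ Matrix.unitaryGroup (Fin 2 → Fin d) ℂ := by
    intro g hg
    rw [← reindex_eq_gate]
    exact reindex_unitary _ hg
  have hZ := blockZ_unitary (hgate hu) (hgate hv) (hgate hx) j
  let e₂ := two (Equiv.refl (Fin (j + 1) → Fin d))
  refine ⟨Matrix.reindex e₂.symm e₂.symm (blockZ (gate u) (gate v) (gate x) j)ᴴ,
    reindex_unitary _ (Unitary.star_mem hZ), ?_⟩
  have hre : Matrix.reindex e₂ e₂ (Matrix.reindex e₂.symm e₂.symm
      (blockZ (gate u) (gate v) (gate x) j)ᴴ) = (blockZ (gate u) (gate v) (gate x) j)ᴴ := by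
    ext p q
    simp
  rw [hsign, trrel_iff (Equiv.refl _), reindex_ublk, reindex_vblk, hre,
    Matrix.conjTranspose_conjTranspose, at_conjTranspose,
    at_at_eq (2 * j + 1) (by omega), at_at_eq (2 * j + 1) (by omega)]
  exact blockU_relation (gate u) (gate v) (gate x) σ ε h0 h1 j
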